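/- A bijection Ψ of M_2(F_q) is an automorphism of the left-ideal relation digraph of M_2(F_q) if and only if Ψ preserves rank, i.e., rank(Ψ(X)) = rank(X) for every X ∈ M_2(F_q). -/

import Mathlib

/-- The left ideal of `M_2(F)` generated by `X`: the set of all `C * X`. -/
def leftIdeal {F : Type*} [Field F]
    (X : Matrix (Fin 2) (Fin 2) F) : Set (Matrix (Fin 2) (Fin 2) F) :=
  {A | ∃ C : Matrix (Fin 2) (Fin 2) F, A = C * X}

theorem leftIdeal_subset_iff {F : Type*} [Field F] (X Y : Matrix (Fin 2) (Fin 2) F) :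
    leftIdeal X ⊆ leftIdeal Y ↔
      LinearMap.range X.vecMulLinear ≤ LinearMap.range Y.vecMulLinear := by
  constructor
  · intro h
    obtain ⟨C, hC⟩ := h ⟨1, (one_mul X).symm⟩
    rintro _ ⟨v, rfl⟩
    refine ⟨Matrix.vecMul v C, ?_⟩
    simp [Matrix.vecMul_vecMul, ← hC]
  · rintro h _ ⟨C, rfl⟩
    have h2 : ∀ i, ∃ w, Y.vecMulLinear w = X.vecMulLinear (C i) := fun i => h ⟨C i, rfl⟩
    choose D hD using h2
    refine ⟨Matrix.of D, ?_⟩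
    ext i j
    have := congrFun (hD i) j
    simp only [Matrix.vecMulLinear_apply] at this
    rw [Matrix.mul_apply_eq_vecMul, Matrix.mul_apply_eq_vecMul]
    exact this.symm

theorem rank_eq_vecMul {F : Type*} [Field F] (X : Matrix (Fin 2) (Fin 2) F) :
    X.rank = Module.finrank F (LinearMap.range X.vecMulLinear) := by
  rw [Matrix.rank_eq_finrank_span_row, range_vecMulLinear]

theorem rank_le_two {F : Type*} [Field F] (X : Matrix (Fin 2) (Fin 2) F) : X.rank ≤ 2 := by
  simpa using X.rank_le_card_width

theorem leftIdeal_ssubset_iff {F : Type*} [Field F] (X Y : Matrix (Fin 2) (Fin 2) F) :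
    leftIdeal X ⊂ leftIdeal Y ↔ X.rank < Y.rank := by
  rw [ssubset_iff_subset_not_subset, leftIdeal_subset_iff, leftIdeal_subset_iff,
    ← lt_iff_le_not_ge]
  constructor
  · intro h
    rw [rank_eq_vecMul, rank_eq_vecMul]
    exact Submodule.finrank_lt_finrank_of_lt h
  · intro h
    have hY := rank_le_two Y
    refine lt_of_le_of_ne ?_ ?_
    · by_cases h0 : X.rank = 0
      · rw [rank_eq_vecMul, Submodule.finrank_eq_zero] at h0
        rw [h0]
        exact bot_le
      · have h2 : Y.rank = 2 := by omega
        have : LinearMap.range Y.vecMulLinear = ⊤ := by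
          apply Submodule.eq_top_of_finrank_eq
          rw [← rank_eq_vecMul, h2]
          simp
        rw [this]
        exact le_top
    · intro e
      rw [rank_eq_vecMul, rank_eq_vecMul, e] at h
      exact lt_irrefl _ h

/-- A bijection of `M_2(F_q)` is an automorphism of the left-ideal relation
digraph iff it preserves rank. -/
theorem stmt_16 {F : Type*} [Field F] [Fintype F]
    (Ψ : Matrix (Fin 2) (Fin 2) F → Matrix (Fin 2) (Fin 2) F)
    (hbij : Function.Bijective Ψ) :
    (∀ X Y : Matrix (Fin 2) (Fin 2) F,
      leftIdeal X ⊂ leftIdeal Y ↔ leftIdeal (Ψ X) ⊂ leftIdeal (Ψ Y)) ↔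
    (∀ X : Matrix (Fin 2) (Fin 2) F, (Ψ X).rank = X.rank) := by
  simp only [leftIdeal_ssubset_iff]
  constructor
  · intro h X
    have r0 : (0 : Matrix (Fin 2) (Fin 2) F).rank = 0 := Matrix.rank_zero
    have r2 : (1 : Matrix (Fin 2) (Fin 2) F).rank = 2 := by simp [Matrix.rank_one]
    obtain ⟨A, hA⟩ := hbij.2 0
    obtain ⟨B, hB⟩ := hbij.2 1
    have a1 := h 0 X
    have a2 := h X 1
    have a3 := h A X
    have a4 := h X B
    rw [hA] at a3
    rw [hB] at a4
    have b1 := rank_le_two X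
    have b2 := rank_le_two (Ψ X)
    have b3 := rank_le_two B
    have b4 := rank_le_two (Ψ 1)
    omega
  · intro h X Y
    rw [h, h]
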